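/- Chen's identity for the vincular signature: let N₁, N₂ ∈ ℕ, (𝔏,Λ) a pair of an interval partition of [N₁] and Λ ∈ 𝔖_{N₁}, and (𝔐,M) a pair of an interval partition of [N₂] and M ∈ 𝔖_{N₂}. Then for every vincular pattern (𝔰,σ), ⟨GPC((𝔏,Λ) • (𝔐,M)), (𝔰,σ)⟩ = Σ ⟨GPC(𝔏,Λ), (𝔞,α)⟩ · ⟨GPC(𝔐,M), (𝔟,β)⟩, the sum running over all factorizations (𝔰,σ) = (𝔞,α) • (𝔟,β) into vincular patterns (allowing empty factors). -/

import Mathlib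

/-!
A subset `A` of `[N₁ + N₂]` is the same as a pair `A₁ ⊆ [N₁]`, `A₂ ⊆ [N₂]`, through
`A = A₁ ∪ (A₂ + N₁)` (`joinSet`). Both ingredients of an occurrence respect this splitting.

* The blocks of `𝓘(A)` are the connected components of the sets `A ∩ B` with `B` a block of `𝓘`
  (`mem_restrictIP`). As no block of `𝔏 • 𝔐` crosses the cut, `(𝔏 • 𝔐)(A)` is the union of `𝔏(A₁)`
  and the shift of `𝔐(A₂)`, and its standardization is `std 𝔏(A₁) • std 𝔐(A₂)`
  (`restrictIP_joinSet`, `stdIP_joinSet`).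
* Every value of `Λ ⊡ M` on the first part is below every value on the second, so
  `st((Λ ⊡ M)|_A) = st(Λ|_{A₁}) ⊡ st(M|_{A₂})` (`stdRestrict_joinSet`).

An interval partition below a concatenation factors along the same cut (`IPle_concatIP_iff`).
Hence `A` is an occurrence of `p` exactly when `A₁`, `A₂` are occurrences of the two factors of some
factorization of `p` (`joinSet_mem_occurrences_iff`). That factorization is unique: an occurrence
has the size of its pattern, and the size of the first factor determines a factorization of `p`
(`factorizations_injOn`). So the occurrences of `p` are in bijection with the disjoint union, over
the finitely many factorizations, of the products of the sets of occurrences of the factors.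
-/

open Set

/-- A block: a nonempty interval of consecutive positive integers. -/
def IsIntervalBlock (B : Set ℕ) : Prop :=
  B.Nonempty ∧ (∀ x ∈ B, 1 ≤ x) ∧
    ∀ x ∈ B, ∀ z ∈ B, ∀ y : ℕ, x ≤ y → y ≤ z → y ∈ B

/-- An interval partition of a finite subset of the positive integers:
a family of pairwise disjoint nonempty intervals with finite ground set. -/
def IsIntervalPartition (P : Set (Set ℕ)) : Prop :=
  (⋃₀ P).Finite ∧ (∀ B ∈ P, IsIntervalBlock B) ∧
    ∀ B ∈ P, ∀ C ∈ P, B ≠ C → B ∩ C = ∅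

/-- An interval partition with prescribed ground set `A`. -/
def IsIntervalPartitionOf (P : Set (Set ℕ)) (A : Set ℕ) : Prop :=
  IsIntervalPartition P ∧ ⋃₀ P = A

/-- Standardized interval partitions: interval partitions of `{1, …, n}`. -/
def IsStdIP (P : Set (Set ℕ)) : Prop :=
  IsIntervalPartition P ∧ ∃ n : ℕ, ⋃₀ P = Set.Icc 1 n

/-- Refinement order: same ground set, and every block of `P`
is contained in some block of `Q`. -/
def IPle (P Q : Set (Set ℕ)) : Prop :=
  ⋃₀ P = ⋃₀ Q ∧ ∀ B ∈ P, ∃ C ∈ Q, B ⊆ C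

/-- The equivalence relation on blocks generated by having nonempty
intersection (among members of `S`). -/
def glueRel (S : Set (Set ℕ)) : Set ℕ → Set ℕ → Prop :=
  Relation.EqvGen fun X Y => X ∈ S ∧ Y ∈ S ∧ (X ∩ Y).Nonempty

/-- Gluing of two interval partitions. -/
def glue (P Q : Set (Set ℕ)) : Set (Set ℕ) :=
  (fun T => ⋃₀ {X ∈ P ∪ Q | glueRel (P ∪ Q) T X}) '' (P ∪ Q)

/-- The relation on `A` generated by `y = x + 1`. -/
def cliqueRel (A : Set ℕ) : ℕ → ℕ → Prop :=
  Relation.EqvGen fun x y => x ∈ A ∧ y ∈ A ∧ y = x + 1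

/-- `cliques A`: the coarsest interval partition of `A`. -/
def cliques (A : Set ℕ) : Set (Set ℕ) :=
  (fun x => {y ∈ A | cliqueRel A x y}) '' A

/-- `𝓘(A)`: the interval partition of `A ∩ ⋃₀ 𝓘` induced by `𝓘`. -/
def restrictIP (P : Set (Set ℕ)) (A : Set ℕ) : Set (Set ℕ) :=
  {Z | Z ≠ ∅ ∧ ∃ B ∈ P, ∃ c ∈ cliques A, Z = B ∩ c}

/-- The unique order preserving map sending a finite `S ⊆ ℕ` onto `{1,…,|S|}`. -/
noncomputable def stdMap (S : Set ℕ) (x : ℕ) : ℕ := {y ∈ S | y ≤ x}.ncard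

/-- Standardization of an interval partition. -/
noncomputable def stdIP (P : Set (Set ℕ)) : Set (Set ℕ) :=
  (fun B => stdMap (⋃₀ P) '' B) '' P

/-- Shifting all blocks of a partition up by `m`. -/
def shiftIP (m : ℕ) (P : Set (Set ℕ)) : Set (Set ℕ) :=
  (fun B => (fun x => x + m) '' B) '' P

/-- Concatenation of standardized interval partitions. -/
noncomputable def concatIP (P Q : Set (Set ℕ)) : Set (Set ℕ) :=
  P ∪ shiftIP (⋃₀ P).ncard Q

/-- Quasi-shuffle section coefficient `c(𝔰,𝔱;𝔤)`. -/
noncomputable def secCoeff (s t g : Set (Set ℕ)) : ℕ :=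
  {p : Set ℕ × Set ℕ | p.1 ∪ p.2 = ⋃₀ g ∧
      ∃ I I' : Set (Set ℕ), IsIntervalPartitionOf I p.1 ∧ IsIntervalPartitionOf I' p.2 ∧
        stdIP I = s ∧ stdIP I' = t ∧ glue I I' = g}.ncard

/-- The signature pairing `⟨IPC(𝔏), 𝔰⟩`. -/
noncomputable def IPC (L s : Set (Set ℕ)) : ℕ :=
  {A : Set ℕ | A ⊆ ⋃₀ L ∧ IPle s (stdIP (restrictIP L A))}.ncard

open Classical in
/-- The unique refinement `𝓘_𝔰` of `𝓘` with standardization `𝔰` (junk value otherwise). -/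
noncomputable def refineTo (P s : Set (Set ℕ)) : Set (Set ℕ) :=
  if h : ∃ Q : Set (Set ℕ), IsIntervalPartition Q ∧ IPle Q P ∧ stdIP Q = s then h.choose
  else ∅

/-- The concatenation of single blocks of the sizes listed in `l`. -/
noncomputable def concatList (l : List ℕ) : Set (Set ℕ) :=
  l.foldl (fun acc m => concatIP acc {Set.Icc 1 m}) ∅

/-- A permutation of `{1,…,n}`, encoded as a function on `ℕ` fixing everything else. -/
def IsPermOf (n : ℕ) (σ : ℕ → ℕ) : Prop :=
  Set.BijOn σ (Set.Icc 1 n) (Set.Icc 1 n) ∧ ∀ x : ℕ, x ∉ Set.Icc 1 n → σ x = x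

open Classical in
/-- The `i`-th smallest element of `A` (junk value otherwise). -/
noncomputable def nthElt (A : Set ℕ) (i : ℕ) : ℕ :=
  if h : ∃ x ∈ A, stdMap A x = i then h.choose else 0

/-- Standardization `st(Λ|_A)` of `Λ` restricted to `A`: the permutation of `{1,…,|A|}`
recording the relative order of the values of `Λ` on `A`. -/
noncomputable def stdRestrict (lam : ℕ → ℕ) (A : Set ℕ) : ℕ → ℕ := fun i =>
  if 1 ≤ i ∧ i ≤ A.ncard then {b ∈ A | lam b ≤ lam (nthElt A i)}.ncard else i

/-- Concatenation `σ ⊡ τ` of permutations of `{1,…,m}` and `{1,…,n}`. -/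
def permConcat (m n : ℕ) (σ τ : ℕ → ℕ) : ℕ → ℕ := fun i =>
  if 1 ≤ i ∧ i ≤ m then σ i
  else if m + 1 ≤ i ∧ i ≤ m + n then τ (i - m) + m
  else i

/-- A vincular pattern: a standardized interval partition of `{1,…,n}`
together with a permutation of `{1,…,n}`. -/
def IsVincular (p : Set (Set ℕ) × (ℕ → ℕ)) : Prop :=
  ∃ n : ℕ, IsIntervalPartitionOf p.1 (Set.Icc 1 n) ∧ IsPermOf n p.2

/-- Concatenation of vincular patterns. -/
noncomputable def vincConcat (p q : Set (Set ℕ) × (ℕ → ℕ)) : Set (Set ℕ) × (ℕ → ℕ) :=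
  (concatIP p.1 q.1, permConcat (⋃₀ p.1).ncard (⋃₀ q.1).ncard p.2 q.2)

/-- Vincular section coefficient `C((𝔰,σ),(𝔱,τ);(𝔤,γ))`. -/
noncomputable def vincCoeff (p q r : Set (Set ℕ) × (ℕ → ℕ)) : ℕ :=
  {AB : Set ℕ × Set ℕ | AB.1 ∪ AB.2 = ⋃₀ r.1 ∧
      (∃ I I' : Set (Set ℕ), IsIntervalPartitionOf I AB.1 ∧ IsIntervalPartitionOf I' AB.2 ∧
        stdIP I = p.1 ∧ stdIP I' = q.1 ∧ glue I I' = r.1) ∧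
      stdRestrict r.2 AB.1 = p.2 ∧ stdRestrict r.2 AB.2 = q.2}.ncard

/-- Vincular signature pairing `⟨GPC(𝔏,Λ), (𝔰,σ)⟩`. -/
noncomputable def GPC (L : Set (Set ℕ)) (lam : ℕ → ℕ) (p : Set (Set ℕ) × (ℕ → ℕ)) : ℕ :=
  {A : Set ℕ | A ⊆ ⋃₀ L ∧ IPle p.1 (stdIP (restrictIP L A)) ∧ stdRestrict lam A = p.2}.ncard

/-! ### Standardization of finite sets -/

theorem stdMap_lt {S : Set ℕ} (hS : S.Finite) {x y : ℕ} (hy : y ∈ S) (h : x < y) :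
    stdMap S x < stdMap S y := by
  apply Set.ncard_lt_ncard _ (hS.subset (Set.sep_subset _ _))
  refine ⟨fun z hz => ⟨hz.1, hz.2.trans h.le⟩, fun hsub => ?_⟩
  exact absurd (hsub ⟨hy, le_rfl⟩).2 (not_le.mpr h)

theorem stdMap_bijOn {S : Set ℕ} (hS : S.Finite) :
    Set.BijOn (stdMap S) S (Set.Icc 1 S.ncard) := by
  have hm : Set.MapsTo (stdMap S) S (Set.Icc 1 S.ncard) := by
    intro x hx
    refine ⟨?_, Set.ncard_le_ncard (Set.sep_subset _ _) hS⟩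
    exact (Set.ncard_pos (hS.subset (Set.sep_subset _ _))).mpr ⟨x, hx, le_rfl⟩
  have hi : Set.InjOn (stdMap S) S := by
    intro x hx y hy h
    rcases lt_trichotomy x y with hlt | heq | hlt
    · exact absurd h (stdMap_lt hS hy hlt).ne
    · exact heq
    · exact absurd h (stdMap_lt hS hx hlt).ne'
  refine ⟨hm, hi, ?_⟩
  have : stdMap S '' S = Set.Icc 1 S.ncard := by
    apply Set.eq_of_subset_of_ncard_le hm.image_subset _ (Set.finite_Icc _ _)
    rw [hi.ncard_image]
    simp [Set.ncard_eq_toFinset_card']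
  exact this.ge

theorem nthElt_stdMap {S : Set ℕ} (hS : S.Finite) {x : ℕ} (hx : x ∈ S) :
    nthElt S (stdMap S x) = x := by
  have h : ∃ y ∈ S, stdMap S y = stdMap S x := ⟨x, hx, rfl⟩
  unfold nthElt
  rw [dif_pos h]
  exact (stdMap_bijOn hS).injOn h.choose_spec.1 hx h.choose_spec.2

theorem stdRestrict_stdMap {S : Set ℕ} (hS : S.Finite) (lam : ℕ → ℕ) {x : ℕ} (hx : x ∈ S) :
    stdRestrict lam S (stdMap S x) = {b ∈ S | lam b ≤ lam x}.ncard := by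
  have := (stdMap_bijOn hS).mapsTo hx
  unfold stdRestrict
  rw [if_pos ⟨this.1, this.2⟩, nthElt_stdMap hS hx]

/-- `st(Λ|_S)` is a permutation: along the bijections `S → [|S|]` and `Λ(S) → [|S|]`
given by standardization it is the bijection `Λ : S → Λ(S)`. -/
theorem stdRestrict_isPermOf {S : Set ℕ} (hS : S.Finite) {lam : ℕ → ℕ} (hl : Set.InjOn lam S) :
    IsPermOf S.ncard (stdRestrict lam S) := by
  refine ⟨?_, fun x hx => if_neg hx⟩
  have h1 := stdMap_bijOn hS
  have h2 := stdMap_bijOn (hS.image lam)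
  rw [hl.ncard_image] at h2
  have key : ∀ x ∈ S, stdRestrict lam S (stdMap S x) = stdMap (lam '' S) (lam x) := by
    intro x hx
    rw [stdRestrict_stdMap hS lam hx, stdMap]
    rw [← (hl.mono (Set.sep_subset S _)).ncard_image]
    congr 1
    ext c
    simp only [Set.mem_image, Set.mem_ofPred_eq]
    constructor
    · rintro ⟨b, ⟨hb, hbx⟩, rfl⟩
      exact ⟨⟨b, hb, rfl⟩, hbx⟩
    · rintro ⟨⟨b, hb, rfl⟩, hbx⟩
      exact ⟨b, ⟨hb, hbx⟩, rfl⟩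
  have h3 : Set.BijOn (stdMap (lam '' S) ∘ lam) S (Set.Icc 1 S.ncard) :=
    h2.comp hl.bijOn_image
  have h4 : Set.BijOn (stdRestrict lam S ∘ stdMap S) S (Set.Icc 1 S.ncard) :=
    h3.congr fun x hx => (key x hx).symm
  rw [Set.bijOn_comp_iff h1.injOn, h1.image_eq] at h4
  exact h4

/-! ### Disjoint unions of an initial set and a shifted set -/

/-- The subset `A₁ ∪ (A₂ + N)` of `[N + N']` made of `A₁ ⊆ [N]` and `A₂ ⊆ [N']`. -/
def joinSet (N : ℕ) (A₁ A₂ : Set ℕ) : Set ℕ := A₁ ∪ (fun x => x + N) '' A₂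

theorem shift_injective (N : ℕ) : Function.Injective (fun x : ℕ => x + N) :=
  fun _ _ h => Nat.add_right_cancel h

section Join

variable {N N' : ℕ} {A₁ A₂ : Set ℕ}

theorem mem_joinSet_low (h2 : A₂ ⊆ Set.Icc 1 N') {x : ℕ} (hx : x ≤ N) :
    x ∈ joinSet N A₁ A₂ ↔ x ∈ A₁ := by
  refine ⟨?_, Or.inl⟩
  rintro (h | ⟨y, hy, rfl⟩)
  · exact h
  · have := (h2 hy).1
    simp only at hx
    omega

theorem mem_joinSet_high (h1 : A₁ ⊆ Set.Icc 1 N) {x : ℕ} (hx : 1 ≤ x) :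
    x + N ∈ joinSet N A₁ A₂ ↔ x ∈ A₂ := by
  refine ⟨?_, fun h => Or.inr ⟨x, h, rfl⟩⟩
  rintro (h | ⟨y, hy, hyx⟩)
  · have := (h1 h).2
    omega
  · have : y = x := Nat.add_right_cancel hyx
    exact this ▸ hy

theorem joinSet_subset (h1 : A₁ ⊆ Set.Icc 1 N) (h2 : A₂ ⊆ Set.Icc 1 N') :
    joinSet N A₁ A₂ ⊆ Set.Icc 1 (N + N') := by
  rintro x (h | ⟨y, hy, rfl⟩)
  · have := h1 h
    simp only [Set.mem_Icc] at *
    omega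
  · have := h2 hy
    simp only [Set.mem_Icc] at *
    omega

theorem joinSet_Icc (k l : ℕ) : joinSet k (Set.Icc 1 k) (Set.Icc 1 l) = Set.Icc 1 (k + l) := by
  apply (joinSet_subset le_rfl le_rfl).antisymm
  intro x hx
  simp only [Set.mem_Icc] at hx
  by_cases h : x ≤ k
  · exact Or.inl ⟨hx.1, h⟩
  · exact Or.inr ⟨x - k, ⟨by omega, by omega⟩, by simp only; omega⟩

theorem exists_joinSet {A : Set ℕ} (hA : A ⊆ Set.Icc 1 (N + N')) :
    ∃ A₁ A₂, A₁ ⊆ Set.Icc 1 N ∧ A₂ ⊆ Set.Icc 1 N' ∧ joinSet N A₁ A₂ = A := by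
  refine ⟨A ∩ Set.Icc 1 N, (fun x => x + N) ⁻¹' A ∩ Set.Icc 1 N', Set.inter_subset_right,
    Set.inter_subset_right, ?_⟩
  ext x
  constructor
  · rintro (h | ⟨y, hy, rfl⟩)
    · exact h.1
    · exact hy.1
  · intro hx
    have := hA hx
    simp only [Set.mem_Icc] at this
    by_cases h : x ≤ N
    · exact Or.inl ⟨hx, this.1, h⟩
    · refine Or.inr ⟨x - N, ⟨?_, by omega, by omega⟩, by simp only; omega⟩
      rw [Set.mem_preimage, Nat.sub_add_cancel (by omega)]
      exact hx

theorem joinSet_injOn : Set.InjOn (fun q : Set ℕ × Set ℕ => joinSet N q.1 q.2)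
    {q | q.1 ⊆ Set.Icc 1 N ∧ q.2 ⊆ Set.Icc 1 N'} := by
  rintro ⟨a, b⟩ ⟨ha, hb⟩ ⟨a', b'⟩ ⟨ha', hb'⟩ h
  simp only at h ha hb ha' hb'
  have e1 : a = a' := by
    ext x
    by_cases hx : x ≤ N
    · rw [← mem_joinSet_low hb hx, h, mem_joinSet_low hb' hx]
    · exact ⟨fun hh => absurd (ha hh).2 hx, fun hh => absurd (ha' hh).2 hx⟩
  have e2 : b = b' := by
    ext x
    by_cases hx : 1 ≤ x
    · rw [← mem_joinSet_high ha hx, h, mem_joinSet_high ha' hx]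
    · exact ⟨fun hh => absurd (hb hh).1 hx, fun hh => absurd (hb' hh).1 hx⟩
  rw [e1, e2]

theorem ncard_joinSet_sep (h1 : A₁ ⊆ Set.Icc 1 N) (h2 : A₂ ⊆ Set.Icc 1 N') (P : ℕ → Prop) :
    {y ∈ joinSet N A₁ A₂ | P y}.ncard
      = {y ∈ A₁ | P y}.ncard + {y ∈ A₂ | P (y + N)}.ncard := by
  have f1 : {y ∈ A₁ | P y}.Finite :=
    (Set.finite_Icc 1 N).subset ((Set.sep_subset _ _).trans h1)
  have f2 : {y ∈ A₂ | P (y + N)}.Finite :=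
    (Set.finite_Icc 1 N').subset ((Set.sep_subset _ _).trans h2)
  have e : {y ∈ joinSet N A₁ A₂ | P y}
      = {y ∈ A₁ | P y} ∪ (fun x => x + N) '' {y ∈ A₂ | P (y + N)} := by
    ext y
    constructor
    · rintro ⟨h | ⟨z, hz, rfl⟩, hP⟩
      · exact Or.inl ⟨h, hP⟩
      · exact Or.inr ⟨z, ⟨hz, hP⟩, rfl⟩
    · rintro (⟨h, hP⟩ | ⟨z, ⟨hz, hP⟩, rfl⟩)
      · exact ⟨Or.inl h, hP⟩
      · exact ⟨Or.inr ⟨z, hz, rfl⟩, hP⟩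
  rw [e, Set.ncard_union_eq _ f1 (f2.image _), (shift_injective N).injOn.ncard_image]
  rw [Set.disjoint_left]
  rintro _ ⟨hy, -⟩ ⟨z, ⟨hz, -⟩, rfl⟩
  have := (h1 hy).2
  have := (h2 hz).1
  simp only at *
  omega

theorem ncard_joinSet (h1 : A₁ ⊆ Set.Icc 1 N) (h2 : A₂ ⊆ Set.Icc 1 N') :
    (joinSet N A₁ A₂).ncard = A₁.ncard + A₂.ncard := by
  simpa using ncard_joinSet_sep h1 h2 (fun _ => True)

theorem stdMap_joinSet_low (h1 : A₁ ⊆ Set.Icc 1 N) (h2 : A₂ ⊆ Set.Icc 1 N') {x : ℕ}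
    (hx : x ≤ N) : stdMap (joinSet N A₁ A₂) x = stdMap A₁ x := by
  unfold stdMap
  rw [ncard_joinSet_sep h1 h2]
  have : {y ∈ A₂ | y + N ≤ x} = ∅ := by
    rw [Set.eq_empty_iff_forall_notMem]
    rintro y ⟨hy, hyx⟩
    have := (h2 hy).1
    omega
  rw [this, Set.ncard_empty, add_zero]

theorem stdMap_joinSet_high (h1 : A₁ ⊆ Set.Icc 1 N) (h2 : A₂ ⊆ Set.Icc 1 N') (x : ℕ) :
    stdMap (joinSet N A₁ A₂) (x + N) = stdMap A₂ x + A₁.ncard := by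
  unfold stdMap
  rw [ncard_joinSet_sep h1 h2, add_comm]
  congr 2
  · ext y
    simp
  · ext y
    refine ⟨fun h => h.1, fun h => ⟨h, (h1 h).2.trans (Nat.le_add_left _ _)⟩⟩

/-- Standardized restriction turns `⊡` on permutations of `[N]`, `[N']` into `⊡` of the
standardized restrictions: all values on the first part lie below all values on the second. -/
theorem stdRestrict_joinSet (h1 : A₁ ⊆ Set.Icc 1 N) (h2 : A₂ ⊆ Set.Icc 1 N') {lam mu : ℕ → ℕ}
    (hlam : IsPermOf N lam) (hmu : IsPermOf N' mu) :
    stdRestrict (permConcat N N' lam mu) (joinSet N A₁ A₂)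
      = permConcat A₁.ncard A₂.ncard (stdRestrict lam A₁) (stdRestrict mu A₂) := by
  have f1 := (Set.finite_Icc 1 N).subset h1
  have f2 := (Set.finite_Icc 1 N').subset h2
  have f := (Set.finite_Icc 1 (N + N')).subset (joinSet_subset h1 h2)
  have low : ∀ x ∈ A₁, permConcat N N' lam mu x = lam x := fun x hx =>
    if_pos ⟨(h1 hx).1, (h1 hx).2⟩
  have high : ∀ x ∈ A₂, permConcat N N' lam mu (x + N) = mu x + N := by
    intro x hx
    have := h2 hx
    simp only [Set.mem_Icc] at this
    unfold permConcat
    rw [if_neg (by omega), if_pos (by omega), Nat.add_sub_cancel]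
  generalize permConcat N N' lam mu = Λ at low high ⊢
  funext i
  unfold permConcat
  split_ifs with hi hi'
  · obtain ⟨x, hx, rfl⟩ := (stdMap_bijOn f1).surjOn hi
    rw [stdRestrict_stdMap f1 lam hx, ← stdMap_joinSet_low h1 h2 (h1 hx).2,
      stdRestrict_stdMap f _ (Or.inl hx), ncard_joinSet_sep h1 h2, low x hx]
    have e2 : {y ∈ A₂ | Λ (y + N) ≤ lam x} = ∅ := by
      rw [Set.eq_empty_iff_forall_notMem]
      rintro y ⟨hy, hyx⟩
      rw [high y hy] at hyx
      have a1 := (hlam.1.mapsTo (h1 hx)).2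
      have a2 := (hmu.1.mapsTo (h2 hy)).1
      omega
    rw [e2, Set.ncard_empty, add_zero]
    congr 1
    ext y
    refine and_congr_right fun hy => ?_
    rw [low y hy]
  · have hi2 : i - A₁.ncard ∈ Set.Icc 1 A₂.ncard := by
      simp only [Set.mem_Icc]
      omega
    obtain ⟨x, hx, hxi⟩ := (stdMap_bijOn f2).surjOn hi2
    have hi3 : i = stdMap (joinSet N A₁ A₂) (x + N) := by
      rw [stdMap_joinSet_high h1 h2]
      omega
    rw [← hxi, stdRestrict_stdMap f2 mu hx, hi3, stdRestrict_stdMap f _ (Or.inr ⟨x, hx, rfl⟩),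
      ncard_joinSet_sep h1 h2, high x hx]
    have e1 : {y ∈ A₁ | Λ y ≤ mu x + N} = A₁ := by
      refine (Set.sep_subset _ _).antisymm fun y hy => ⟨hy, ?_⟩
      rw [low y hy]
      exact (hlam.1.mapsTo (h1 hy)).2.trans (Nat.le_add_left _ _)
    rw [e1, add_comm]
    congr 2
    ext y
    refine and_congr_right fun hy => ?_
    rw [high y hy, Nat.add_le_add_iff_right]
  · unfold stdRestrict
    rw [ncard_joinSet h1 h2, if_neg (by omega)]

end Join

/-! ### Connected components of restricted interval partitions -/

theorem cliqueRel_iff {A : Set ℕ} {x y : ℕ} (hx : x ∈ A) :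
    cliqueRel A x y ↔ Set.uIcc x y ⊆ A := by
  constructor
  · intro h
    have key : x = y ∨ Set.uIcc x y ⊆ A := by
      clear hx
      induction h with
      | rel a b h =>
        obtain ⟨ha, hb, rfl⟩ := h
        right
        intro z hz
        rw [Set.mem_uIcc] at hz
        have : z = a ∨ z = a + 1 := by omega
        rcases this with rfl | rfl <;> assumption
      | refl a => exact Or.inl rfl
      | symm a b _ ih => rwa [eq_comm, Set.uIcc_comm]
      | trans a b c _ _ ih1 ih2 =>
        rcases ih1 with rfl | ih1
        · exact ih2
        · rcases ih2 with rfl | ih2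
          · exact Or.inr ih1
          · exact Or.inr (Set.uIcc_subset_uIcc_union_uIcc.trans (Set.union_subset ih1 ih2))
    rcases key with rfl | h
    · simpa using hx
    · exact h
  · have main : ∀ a b : ℕ, a ≤ b → Set.uIcc a b ⊆ A → cliqueRel A a b := by
      intro a b hab
      induction b, hab using Nat.le_induction with
      | base => exact fun _ => Relation.EqvGen.refl _
      | succ b hb ih =>
        intro h
        refine Relation.EqvGen.trans _ b _ (ih fun z hz => h ?_) (Relation.EqvGen.rel _ _
          ⟨h ?_, h ?_, rfl⟩)
        all_goals rw [Set.mem_uIcc] at *; omega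
    intro h
    rcases le_total x y with hxy | hxy
    · exact main x y hxy h
    · rw [Set.uIcc_comm] at h
      exact Relation.EqvGen.symm _ _ (main y x hxy h)

/-- The blocks of `𝓘(A)` are the connected components of the sets `A ∩ B`, `B` a block of `𝓘`;
in particular they depend only on the traces of `A` on the blocks. -/
theorem mem_restrictIP {P : Set (Set ℕ)} (hP : ∀ B ∈ P, IsIntervalBlock B) {A Z : Set ℕ} :
    Z ∈ restrictIP P A ↔ ∃ B ∈ P, ∃ x ∈ A ∩ B, Z = Set.ordConnectedComponent (A ∩ B) x := by
  have comp : ∀ B ∈ P, ∀ x ∈ A ∩ B, B ∩ {y ∈ A | cliqueRel A x y}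
      = Set.ordConnectedComponent (A ∩ B) x := by
    rintro B hB x ⟨hxA, hxB⟩
    ext y
    simp only [Set.mem_inter_iff, Set.mem_ofPred_eq, cliqueRel_iff hxA,
      Set.mem_ordConnectedComponent, Set.subset_inter_iff]
    constructor
    · rintro ⟨hyB, hyA, h⟩
      refine ⟨h, fun z hz => ?_⟩
      rw [Set.mem_uIcc] at hz
      rcases hz with hz | hz
      · exact (hP B hB).2.2 x hxB y hyB z hz.1 hz.2
      · exact (hP B hB).2.2 y hyB x hxB z hz.1 hz.2
    · rintro ⟨h, h'⟩
      exact ⟨h' Set.right_mem_uIcc, h Set.right_mem_uIcc, h⟩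
  constructor
  · rintro ⟨hZ, B, hB, _, ⟨x, hx, rfl⟩, rfl⟩
    obtain ⟨z, hzB, hzA, hxz⟩ := Set.nonempty_iff_ne_empty.mpr hZ
    refine ⟨B, hB, z, ⟨hzA, hzB⟩, ?_⟩
    rw [← comp B hB z ⟨hzA, hzB⟩]
    congr 1
    ext y
    refine and_congr_right fun _ => ⟨fun h => ?_, fun h => ?_⟩
    · exact Relation.EqvGen.trans _ _ _ (Relation.EqvGen.symm _ _ hxz) h
    · exact Relation.EqvGen.trans _ _ _ hxz h
  · rintro ⟨B, hB, x, hx, rfl⟩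
    refine ⟨?_, B, hB, _, ⟨x, hx.1, rfl⟩, (comp B hB x hx).symm⟩
    rw [← Set.nonempty_iff_ne_empty, Set.nonempty_ordConnectedComponent]
    exact hx

theorem sUnion_restrictIP {P : Set (Set ℕ)} (hP : ∀ B ∈ P, IsIntervalBlock B) {A : Set ℕ}
    (hA : A ⊆ ⋃₀ P) : ⋃₀ restrictIP P A = A := by
  ext x
  constructor
  · rintro ⟨Z, hZ, hx⟩
    obtain ⟨B, -, y, -, rfl⟩ := (mem_restrictIP hP).1 hZ
    exact (Set.ordConnectedComponent_subset hx).1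
  · intro hx
    obtain ⟨B, hB, hxB⟩ := hA hx
    exact ⟨_, (mem_restrictIP hP).2 ⟨B, hB, x, ⟨hx, hxB⟩, rfl⟩,
      Set.self_mem_ordConnectedComponent.2 ⟨hx, hxB⟩⟩

theorem ordConnectedComponent_shift (N : ℕ) (X : Set ℕ) (x : ℕ) :
    Set.ordConnectedComponent ((fun y => y + N) '' X) (x + N)
      = (fun y => y + N) '' Set.ordConnectedComponent X x := by
  have key : ∀ z, Set.uIcc (x + N) (z + N) ⊆ (fun y => y + N) '' X ↔ Set.uIcc x z ⊆ X := by
    intro z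
    constructor
    · intro h w hw
      have : w + N ∈ Set.uIcc (x + N) (z + N) := by
        rw [Set.mem_uIcc] at *
        omega
      obtain ⟨v, hv, hvw⟩ := h this
      exact (Nat.add_right_cancel hvw) ▸ hv
    · intro h w hw
      rw [Set.mem_uIcc] at hw
      refine ⟨w - N, h ?_, by simp only; omega⟩
      rw [Set.mem_uIcc]
      omega
  ext y
  constructor
  · intro hy
    obtain ⟨z, -, rfl⟩ := Set.ordConnectedComponent_subset hy
    exact ⟨z, (key z).1 hy, rfl⟩
  · rintro ⟨z, hz, rfl⟩
    exact (key z).2 hz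

theorem sUnion_shiftIP (m : ℕ) (P : Set (Set ℕ)) :
    ⋃₀ shiftIP m P = (fun x => x + m) '' ⋃₀ P := by
  rw [Set.sUnion_eq_biUnion, Set.sUnion_eq_biUnion, shiftIP, Set.biUnion_image, Set.image_iUnion₂]

theorem ncard_Icc_one (n : ℕ) : (Set.Icc 1 n).ncard = n := by
  simp [Set.ncard_eq_toFinset_card']

theorem sUnion_concatIP (P Q : Set (Set ℕ)) :
    ⋃₀ concatIP P Q = joinSet (⋃₀ P).ncard (⋃₀ P) (⋃₀ Q) := by
  rw [concatIP, Set.sUnion_union, sUnion_shiftIP, joinSet]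

theorem shift_isIntervalBlock {N : ℕ} {B : Set ℕ} (hB : IsIntervalBlock B) :
    IsIntervalBlock ((fun x => x + N) '' B) := by
  obtain ⟨h1, h2, h3⟩ := hB
  refine ⟨h1.image _, ?_, ?_⟩
  · rintro _ ⟨x, hx, rfl⟩
    exact (h2 x hx).trans (Nat.le_add_right _ _)
  · rintro _ ⟨x, hx, rfl⟩ _ ⟨z, hz, rfl⟩ y hxy hyz
    simp only at hxy hyz
    exact ⟨y - N, h3 x hx z hz _ (by omega) (by omega), by simp only; omega⟩

/-- No block of `𝔏 • 𝔐` crosses the cut, so restricting it to `A₁ ∪ (A₂ + N)` amounts to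
restricting the two factors separately, even when a clique of that set crosses the cut. -/
theorem restrictIP_joinSet {N N' : ℕ} {L M : Set (Set ℕ)}
    (hL : IsIntervalPartitionOf L (Set.Icc 1 N)) (hM : IsIntervalPartitionOf M (Set.Icc 1 N'))
    {A₁ A₂ : Set ℕ} (h1 : A₁ ⊆ Set.Icc 1 N) (h2 : A₂ ⊆ Set.Icc 1 N') :
    restrictIP (concatIP L M) (joinSet N A₁ A₂)
      = restrictIP L A₁ ∪ shiftIP N (restrictIP M A₂) := by
  have hLM : ∀ B ∈ concatIP L M, IsIntervalBlock B := by
    rintro _ (h | ⟨B, hB, rfl⟩)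
    · exact hL.1.2.1 _ h
    · exact shift_isIntervalBlock (hM.1.2.1 B hB)
  have hc : concatIP L M = L ∪ shiftIP N M := by rw [concatIP, hL.2, ncard_Icc_one]
  have low : ∀ B ∈ L, joinSet N A₁ A₂ ∩ B = A₁ ∩ B := by
    intro B hB
    ext x
    refine and_congr_left fun hx => mem_joinSet_low h2 ?_
    have : x ∈ Set.Icc 1 N := hL.2 ▸ ⟨B, hB, hx⟩
    exact this.2
  have high : ∀ B ∈ M, joinSet N A₁ A₂ ∩ (fun x => x + N) '' B
      = (fun x => x + N) '' (A₂ ∩ B) := by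
    intro B hB
    ext x
    constructor
    · rintro ⟨hx, y, hy, rfl⟩
      exact ⟨y, ⟨(mem_joinSet_high h1 ((hM.1.2.1 B hB).2.1 y hy)).1 hx, hy⟩, rfl⟩
    · rintro ⟨y, hy, rfl⟩
      exact ⟨Or.inr ⟨y, hy.1, rfl⟩, y, hy.2, rfl⟩
  ext Z
  rw [mem_restrictIP hLM, hc, Set.mem_union, mem_restrictIP hL.1.2.1]
  constructor
  · rintro ⟨_, hB | ⟨B, hB, rfl⟩, x, hx, rfl⟩
    · rw [low _ hB] at *
      exact Or.inl ⟨_, hB, x, hx, rfl⟩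
    · simp only [high _ hB] at *
      obtain ⟨y, hy, rfl⟩ := hx
      exact Or.inr ⟨_, (mem_restrictIP hM.1.2.1).2 ⟨B, hB, y, hy, rfl⟩,
        (ordConnectedComponent_shift N _ y).symm⟩
  · rintro (⟨B, hB, x, hx, rfl⟩ | ⟨Z, hZ, rfl⟩)
    · refine ⟨B, Or.inl hB, x, ?_, ?_⟩ <;> rw [low _ hB]
      exact hx
    · obtain ⟨B, hB, y, hy, rfl⟩ := (mem_restrictIP hM.1.2.1).1 hZ
      refine ⟨_, Or.inr ⟨B, hB, rfl⟩, y + N, ?_, ?_⟩ <;> simp only [high _ hB]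
      · exact ⟨y, hy, rfl⟩
      · exact (ordConnectedComponent_shift N _ y).symm

theorem sUnion_stdIP {P : Set (Set ℕ)} (hP : (⋃₀ P).Finite) :
    ⋃₀ stdIP P = Set.Icc 1 (⋃₀ P).ncard := by
  rw [← (stdMap_bijOn hP).image_eq, stdIP]
  generalize stdMap (⋃₀ P) = f
  rw [Set.sUnion_eq_biUnion, Set.sUnion_eq_biUnion, Set.biUnion_image, Set.image_iUnion₂]

theorem stdIP_joinSet {N N' : ℕ} {R₁ R₂ : Set (Set ℕ)} (h1 : ⋃₀ R₁ ⊆ Set.Icc 1 N)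
    (h2 : ⋃₀ R₂ ⊆ Set.Icc 1 N') :
    stdIP (R₁ ∪ shiftIP N R₂) = concatIP (stdIP R₁) (stdIP R₂) := by
  have hu : ⋃₀ (R₁ ∪ shiftIP N R₂) = joinSet N (⋃₀ R₁) (⋃₀ R₂) := by
    rw [Set.sUnion_union, sUnion_shiftIP, joinSet]
  rw [concatIP, sUnion_stdIP ((Set.finite_Icc 1 N).subset h1), ncard_Icc_one, stdIP, hu,
    Set.image_union]
  congr 1
  · refine Set.image_congr fun B hB => Set.image_congr fun x hx => ?_
    exact stdMap_joinSet_low h1 h2 (h1 ⟨B, hB, hx⟩).2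
  · rw [shiftIP, shiftIP, stdIP, Set.image_image, Set.image_image]
    refine Set.image_congr fun B hB => ?_
    rw [Set.image_image, Set.image_image]
    exact Set.image_congr fun x _ => stdMap_joinSet_high h1 h2 x

/-! ### Factorizations of vincular patterns -/

/-- If `𝔰 ≤ 𝔘 • 𝔙`, then no block of `𝔰` crosses the cut, so `𝔰` factors accordingly. -/
theorem IPle_concatIP_iff {k l n : ℕ} {s U V : Set (Set ℕ)} (hU : ⋃₀ U = Set.Icc 1 k)
    (hV : ⋃₀ V = Set.Icc 1 l) (hs : IsIntervalPartitionOf s (Set.Icc 1 n)) :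
    IPle s (concatIP U V) ↔
      ∃ a b, IsIntervalPartitionOf a (Set.Icc 1 k) ∧ IsIntervalPartitionOf b (Set.Icc 1 l) ∧
        concatIP a b = s ∧ IPle a U ∧ IPle b V := by
  have hUk : ∀ B ∈ U, B ⊆ Set.Icc 1 k := fun B hB => hU ▸ Set.subset_sUnion_of_mem hB
  have hVl : ∀ B ∈ V, B ⊆ Set.Icc 1 l := fun B hB => hV ▸ Set.subset_sUnion_of_mem hB
  have hc : concatIP U V = U ∪ shiftIP k V := by rw [concatIP, hU, ncard_Icc_one]
  constructor
  · rintro ⟨hg, hr⟩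
    rw [sUnion_concatIP, hU, hV, ncard_Icc_one] at hg
    set a : Set (Set ℕ) := {B ∈ s | B ⊆ Set.Icc 1 k} with ha
    set b : Set (Set ℕ) :=
      {B | (fun x => x + k) '' B ∈ s ∧ ∀ x ∈ B, 1 ≤ x} with hb
    have hsplit : s = a ∪ shiftIP k b := by
      ext B
      constructor
      · intro hB
        obtain ⟨C, hC, hBC⟩ := hr B hB
        rw [hc] at hC
        rcases hC with hC | ⟨C, hC, rfl⟩
        · exact Or.inl ⟨hB, hBC.trans (hUk C hC)⟩
        · have himg : (fun x => x + k) '' ((fun x => x + k) ⁻¹' B) = B := by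
            rw [Set.image_preimage_eq_iff]
            exact hBC.trans (Set.image_subset_range _ _)
          refine Or.inr ⟨(fun x => x + k) ⁻¹' B, ⟨himg.symm ▸ hB, fun x hx => ?_⟩, himg⟩
          obtain ⟨y, hy, hyx⟩ := hBC hx
          have : y = x := Nat.add_right_cancel hyx
          exact this ▸ (hVl C hC hy).1
      · rintro (hB | ⟨B, hB, rfl⟩)
        · exact hB.1
        · exact hB.1
    have hgs : ⋃₀ s = ⋃₀ a ∪ (fun x => x + k) '' ⋃₀ b := by
      rw [← sUnion_shiftIP, ← Set.sUnion_union, ← hsplit]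
    have hga : ⋃₀ a = Set.Icc 1 k := by
      apply (Set.sUnion_subset fun B hB => hB.2).antisymm
      intro x hx
      have hxs : x ∈ ⋃₀ s := hg ▸ Or.inl hx
      rw [hgs] at hxs
      rcases hxs with h | ⟨y, ⟨B, hB, hy⟩, rfl⟩
      · exact h
      · have := hB.2 y hy
        have := hx.2
        simp only at this
        omega
    have hgb : ⋃₀ b = Set.Icc 1 l := by
      ext x
      constructor
      · rintro ⟨B, hB, hx⟩
        have hx1 := hB.2 x hx
        have hxs : x + k ∈ ⋃₀ s := ⟨_, hB.1, x, hx, rfl⟩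
        rw [hg] at hxs
        exact (mem_joinSet_high le_rfl hx1).1 hxs
      · intro hx
        have hxs : x + k ∈ ⋃₀ s := hg ▸ Or.inr ⟨x, hx, rfl⟩
        rw [hgs] at hxs
        rcases hxs with h | ⟨y, hy, hyx⟩
        · have h3 := (hga ▸ h : x + k ∈ Set.Icc 1 k).2
          have := hx.1
          omega
        · exact (Nat.add_right_cancel hyx : y = x) ▸ hy
    have hpa : IsIntervalPartition a :=
      ⟨hga ▸ Set.finite_Icc _ _, fun B hB => hs.1.2.1 B hB.1,
        fun B hB C hC => hs.1.2.2 B hB.1 C hC.1⟩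
    have hpb : IsIntervalPartition b := by
      refine ⟨hgb ▸ Set.finite_Icc _ _, fun B hB => ⟨?_, hB.2, ?_⟩, fun B hB C hC hne => ?_⟩
      · exact Set.image_nonempty.1 (hs.1.2.1 _ hB.1).1
      · intro x hx z hz y hxy hyz
        obtain ⟨w, hw, hwy⟩ := (hs.1.2.1 _ hB.1).2.2 (x + k) ⟨x, hx, rfl⟩ (z + k) ⟨z, hz, rfl⟩
          (y + k) (by omega) (by omega)
        exact (Nat.add_right_cancel hwy : w = y) ▸ hw
      · have := hs.1.2.2 _ hB.1 _ hC.1 (fun h => hne ((shift_injective k).image_injective h))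
        rwa [← Set.image_inter (shift_injective k), Set.image_eq_empty] at this
    refine ⟨a, b, ⟨hpa, hga⟩, ⟨hpb, hgb⟩, ?_, ⟨hga.trans hU.symm, ?_⟩, ⟨hgb.trans hV.symm, ?_⟩⟩
    · rw [concatIP, hga, ncard_Icc_one, ← hsplit]
    · intro B hB
      obtain ⟨C, hC, hBC⟩ := hr B hB.1
      rw [hc] at hC
      rcases hC with hC | ⟨C, hC, rfl⟩
      · exact ⟨C, hC, hBC⟩
      · obtain ⟨x, hx⟩ := (hs.1.2.1 B hB.1).1
        obtain ⟨y, hy, rfl⟩ := hBC hx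
        have h3 := (hB.2 hx).2
        have := (hVl C hC hy).1
        simp only at h3
        omega
    · intro B hB
      obtain ⟨C, hC, hBC⟩ := hr _ hB.1
      rw [hc] at hC
      rcases hC with hC | ⟨C, hC, rfl⟩
      · obtain ⟨_, x, hx, rfl⟩ := (hs.1.2.1 _ hB.1).1
        have h3 := (hUk C hC (hBC ⟨x, hx, rfl⟩)).2
        have := hB.2 x hx
        simp only at h3
        omega
      · exact ⟨C, hC, (Set.image_subset_image_iff (shift_injective k)).1 hBC⟩
  · rintro ⟨a, b, ha, hb, rfl, ⟨-, hra⟩, ⟨-, hrb⟩⟩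
    refine ⟨?_, ?_⟩
    · rw [sUnion_concatIP, sUnion_concatIP, ha.2, hb.2, hU, hV]
    · have hc' : concatIP a b = a ∪ shiftIP k b := by rw [concatIP, ha.2, ncard_Icc_one]
      rw [hc, hc']
      rintro _ (hB | ⟨B, hB, rfl⟩)
      · obtain ⟨C, hC, hBC⟩ := hra _ hB
        exact ⟨C, Or.inl hC, hBC⟩
      · obtain ⟨C, hC, hBC⟩ := hrb _ hB
        exact ⟨_, Or.inr ⟨C, hC, rfl⟩, Set.image_mono hBC⟩

/-- The set of factorizations of the vincular pattern `p` into two vincular patterns. -/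
def factorizations (p : Set (Set ℕ) × (ℕ → ℕ)) :
    Set ((Set (Set ℕ) × (ℕ → ℕ)) × (Set (Set ℕ) × (ℕ → ℕ))) :=
  {w | IsVincular w.1 ∧ IsVincular w.2 ∧ vincConcat w.1 w.2 = p}

theorem IsVincular.ncard {q : Set (Set ℕ) × (ℕ → ℕ)} (hq : IsVincular q) :
    IsIntervalPartitionOf q.1 (Set.Icc 1 (⋃₀ q.1).ncard) ∧ IsPermOf (⋃₀ q.1).ncard q.2 := by
  obtain ⟨n, h1, h2⟩ := hq
  have : (⋃₀ q.1).ncard = n := by rw [h1.2, ncard_Icc_one]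
  rw [this]
  exact ⟨h1, h2⟩

theorem ncard_factorization {p : Set (Set ℕ) × (ℕ → ℕ)}
    {w : (Set (Set ℕ) × (ℕ → ℕ)) × (Set (Set ℕ) × (ℕ → ℕ))} (hw : w ∈ factorizations p) :
    (⋃₀ p.1).ncard = (⋃₀ w.1.1).ncard + (⋃₀ w.2.1).ncard := by
  obtain ⟨h1, h2, rfl⟩ := hw
  rw [vincConcat, sUnion_concatIP]
  exact ncard_joinSet h1.ncard.1.2.le h2.ncard.1.2.le

/-- The blocks of `𝔞 • 𝔟` inside `[|𝔞|]` are those of `𝔞`. -/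
theorem mem_left_iff {k l : ℕ} {a b : Set (Set ℕ)} (ha : IsIntervalPartitionOf a (Set.Icc 1 k))
    (hb : IsIntervalPartitionOf b (Set.Icc 1 l)) (B : Set ℕ) :
    B ∈ a ↔ B ∈ concatIP a b ∧ B ⊆ Set.Icc 1 k := by
  constructor
  · exact fun h => ⟨Or.inl h, ha.2 ▸ Set.subset_sUnion_of_mem h⟩
  · rintro ⟨h | ⟨C, hC, rfl⟩, hB⟩
    · exact h
    · obtain ⟨⟨x, hx⟩, hpos, -⟩ := hb.1.2.1 C hC
      rw [ha.2, ncard_Icc_one] at hB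
      have h1 := (hB ⟨x, hx, rfl⟩).2
      have := hpos x hx
      simp only at h1
      omega

theorem mem_right_iff {k l : ℕ} {a b : Set (Set ℕ)} (ha : IsIntervalPartitionOf a (Set.Icc 1 k))
    (hb : IsIntervalPartitionOf b (Set.Icc 1 l)) (B : Set ℕ) :
    B ∈ b ↔ (fun x => x + k) '' B ∈ concatIP a b ∧ B ⊆ Set.Icc 1 l := by
  have hc' : concatIP a b = a ∪ shiftIP k b := by rw [concatIP, ha.2, ncard_Icc_one]
  rw [hc']
  constructor
  · exact fun h => ⟨Or.inr ⟨B, h, rfl⟩, hb.2 ▸ Set.subset_sUnion_of_mem h⟩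
  · rintro ⟨h | ⟨C, hC, hCB⟩, hB⟩
    · obtain ⟨_, x, hx, rfl⟩ := (ha.1.2.1 _ h).1
      have h3 : x + k ∈ Set.Icc 1 k := ha.2 ▸ ⟨_, h, x, hx, rfl⟩
      have h4 := h3.2
      have := (hB hx).1
      omega
    · exact (shift_injective k).image_injective hCB ▸ hC

theorem permConcat_cancel {k l : ℕ} {σ τ σ' τ' : ℕ → ℕ} (hσ : IsPermOf k σ) (hσ' : IsPermOf k σ')
    (hτ : IsPermOf l τ) (hτ' : IsPermOf l τ')
    (h : permConcat k l σ τ = permConcat k l σ' τ') : σ = σ' ∧ τ = τ' := by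
  constructor
  · funext i
    by_cases hi : i ∈ Set.Icc 1 k
    · have := congrFun h i
      rwa [permConcat, permConcat, if_pos ⟨hi.1, hi.2⟩, if_pos ⟨hi.1, hi.2⟩] at this
    · rw [hσ.2 i hi, hσ'.2 i hi]
  · funext i
    by_cases hi : i ∈ Set.Icc 1 l
    · have := congrFun h (i + k)
      simp only [Set.mem_Icc] at hi
      have c1 : ¬(1 ≤ i + k ∧ i + k ≤ k) := by omega
      have c2 : k + 1 ≤ i + k ∧ i + k ≤ k + l := by omega
      rw [permConcat, permConcat, if_neg c1, if_neg c1, if_pos c2, if_pos c2,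
        Nat.add_sub_cancel] at this
      exact Nat.add_right_cancel this
    · rw [hτ.2 i hi, hτ'.2 i hi]

/-- A factorization of `p` is determined by the size of its first factor. -/
theorem factorizations_injOn (p : Set (Set ℕ) × (ℕ → ℕ)) :
    Set.InjOn (fun w => (⋃₀ w.1.1).ncard) (factorizations p) := by
  intro w hw w' hw' h
  have e1 := ncard_factorization hw
  have e2 := ncard_factorization hw'
  obtain ⟨h1, h2, hp⟩ := hw
  obtain ⟨h1', h2', hp'⟩ := hw'
  obtain ⟨⟨a, σ⟩, ⟨b, τ⟩⟩ := w
  obtain ⟨⟨a', σ'⟩, ⟨b', τ'⟩⟩ := w'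
  simp only at *
  have hl : (⋃₀ b).ncard = (⋃₀ b').ncard := by omega
  obtain ⟨ha, hσ⟩ := h1.ncard
  obtain ⟨ha', hσ'⟩ := h1'.ncard
  obtain ⟨hb, hτ⟩ := h2.ncard
  obtain ⟨hb', hτ'⟩ := h2'.ncard
  have hpp := hp.trans hp'.symm
  simp only [vincConcat, Prod.mk.injEq] at *
  obtain ⟨hc, hperm⟩ := hpp
  rw [← h] at ha' hσ'
  rw [← hl] at hb' hτ'
  rw [← h, ← hl] at hperm
  obtain ⟨r1, r2⟩ := permConcat_cancel hσ hσ' hτ hτ' hperm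
  refine ⟨⟨?_, r1⟩, ?_, r2⟩
  · ext B
    rw [mem_left_iff ha hb, hc, ← mem_left_iff ha' hb']
  · ext B
    rw [mem_right_iff ha hb, hc, ← mem_right_iff ha' hb']

theorem factorizations_finite (p : Set (Set ℕ) × (ℕ → ℕ)) : (factorizations p).Finite := by
  refine Set.Finite.of_finite_image ((Set.finite_Icc 0 (⋃₀ p.1).ncard).subset ?_)
    (factorizations_injOn p)
  rintro _ ⟨w, hw, rfl⟩
  have := ncard_factorization hw
  simp only [Set.mem_Icc]
  omega

/-! ### Occurrences and the splitting of the count -/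

/-- The occurrences counted by `⟨GPC(𝔏,Λ), p⟩`. -/
def occurrences (L : Set (Set ℕ)) (lam : ℕ → ℕ) (p : Set (Set ℕ) × (ℕ → ℕ)) : Set (Set ℕ) :=
  {A : Set ℕ | A ⊆ ⋃₀ L ∧ IPle p.1 (stdIP (restrictIP L A)) ∧ stdRestrict lam A = p.2}

section Occurrences

variable {N₁ N₂ : ℕ} {L M : Set (Set ℕ)} {lam mu : ℕ → ℕ}

theorem sUnion_std_restrict (hL : IsIntervalPartitionOf L (Set.Icc 1 N₁)) {A : Set ℕ}
    (hA : A ⊆ Set.Icc 1 N₁) : ⋃₀ stdIP (restrictIP L A) = Set.Icc 1 A.ncard := by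
  have h : ⋃₀ restrictIP L A = A := sUnion_restrictIP hL.1.2.1 (hL.2 ▸ hA)
  rw [sUnion_stdIP (h.symm ▸ (Set.finite_Icc 1 N₁).subset hA), h]

/-- An occurrence has as many elements as the pattern. -/
theorem ncard_of_mem_occurrences (hL : IsIntervalPartitionOf L (Set.Icc 1 N₁))
    {p : Set (Set ℕ) × (ℕ → ℕ)} {A : Set ℕ} (hA : A ∈ occurrences L lam p) :
    A.ncard = (⋃₀ p.1).ncard := by
  rw [hA.2.1.1, sUnion_std_restrict hL (hL.2 ▸ hA.1), ncard_Icc_one]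

theorem occurrences_finite (hL : IsIntervalPartitionOf L (Set.Icc 1 N₁))
    (p : Set (Set ℕ) × (ℕ → ℕ)) : (occurrences L lam p).Finite :=
  (Set.finite_Icc 1 N₁).finite_subsets.subset fun _ hA => hL.2 ▸ hA.1

/-- `A₁ ∪ (A₂ + N₁)` is an occurrence of `p` in the concatenation exactly when `A₁`, `A₂` are
occurrences of the two factors of some factorization of `p`. -/
theorem joinSet_mem_occurrences_iff
    (hL : IsIntervalPartitionOf L (Set.Icc 1 N₁)) (hlam : IsPermOf N₁ lam)
    (hM : IsIntervalPartitionOf M (Set.Icc 1 N₂)) (hmu : IsPermOf N₂ mu)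
    {p : Set (Set ℕ) × (ℕ → ℕ)} (hp : IsVincular p) {A₁ A₂ : Set ℕ}
    (h1 : A₁ ⊆ Set.Icc 1 N₁) (h2 : A₂ ⊆ Set.Icc 1 N₂) :
    joinSet N₁ A₁ A₂ ∈ occurrences (concatIP L M) (permConcat N₁ N₂ lam mu) p ↔
      ∃ w ∈ factorizations p, A₁ ∈ occurrences L lam w.1 ∧ A₂ ∈ occurrences M mu w.2 := by
  have g1 := sUnion_std_restrict hL h1
  have g2 := sUnion_std_restrict hM h2
  have hsub : joinSet N₁ A₁ A₂ ⊆ ⋃₀ concatIP L M := by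
    rw [sUnion_concatIP, hL.2, hM.2, ncard_Icc_one, joinSet_Icc]
    exact joinSet_subset h1 h2
  have hstd : stdIP (restrictIP (concatIP L M) (joinSet N₁ A₁ A₂))
      = concatIP (stdIP (restrictIP L A₁)) (stdIP (restrictIP M A₂)) := by
    rw [restrictIP_joinSet hL hM h1 h2]
    apply stdIP_joinSet (N' := N₂)
    · rwa [sUnion_restrictIP hL.1.2.1 (hL.2 ▸ h1)]
    · rwa [sUnion_restrictIP hM.1.2.1 (hM.2 ▸ h2)]
  have perm1 : IsPermOf A₁.ncard (stdRestrict lam A₁) :=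
    stdRestrict_isPermOf ((Set.finite_Icc 1 N₁).subset h1) (hlam.1.injOn.mono h1)
  have perm2 : IsPermOf A₂.ncard (stdRestrict mu A₂) :=
    stdRestrict_isPermOf ((Set.finite_Icc 1 N₂).subset h2) (hmu.1.injOn.mono h2)
  constructor
  · rintro ⟨-, hle, hst⟩
    rw [hstd, IPle_concatIP_iff g1 g2 hp.ncard.1] at hle
    obtain ⟨a, b, ha, hb, hab, hau, hbv⟩ := hle
    rw [stdRestrict_joinSet h1 h2 hlam hmu] at hst
    refine ⟨((a, stdRestrict lam A₁), (b, stdRestrict mu A₂)), ⟨⟨_, ha, perm1⟩, ⟨_, hb, perm2⟩, ?_⟩,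
      ⟨hL.2 ▸ h1, hau, rfl⟩, ⟨hM.2 ▸ h2, hbv, rfl⟩⟩
    simp only [vincConcat, ha.2, hb.2, ncard_Icc_one, hst, hab]
  · rintro ⟨⟨⟨a, σ⟩, ⟨b, τ⟩⟩, ⟨v1, v2, hvp⟩, o1, o2⟩
    have n1 := ncard_of_mem_occurrences hL o1
    have n2 := ncard_of_mem_occurrences hM o2
    obtain ⟨-, i1, s1⟩ := o1
    obtain ⟨-, i2, s2⟩ := o2
    have ha := v1.ncard.1
    have hb := v2.ncard.1
    simp only at *
    rw [← n1] at ha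
    rw [← n2] at hb
    refine ⟨hsub, ?_, ?_⟩
    · rw [hstd, IPle_concatIP_iff g1 g2 hp.ncard.1]
      exact ⟨a, b, ha, hb, congrArg Prod.fst hvp, i1, i2⟩
    · rw [stdRestrict_joinSet h1 h2 hlam hmu, s1, s2, n1, n2]
      exact congrArg Prod.snd hvp

end Occurrences

/-- Chen's identity for the vincular signature. -/
theorem GPC_chen (N₁ N₂ : ℕ) (L M : Set (Set ℕ)) (lam mu : ℕ → ℕ)
    (hL : IsIntervalPartitionOf L (Set.Icc 1 N₁)) (hlam : IsPermOf N₁ lam)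
    (hM : IsIntervalPartitionOf M (Set.Icc 1 N₂)) (hmu : IsPermOf N₂ mu)
    (p : Set (Set ℕ) × (ℕ → ℕ)) (hp : IsVincular p) :
    GPC (vincConcat (L, lam) (M, mu)).1 (vincConcat (L, lam) (M, mu)).2 p
      = ∑ᶠ w ∈ {w : (Set (Set ℕ) × (ℕ → ℕ)) × (Set (Set ℕ) × (ℕ → ℕ)) |
            IsVincular w.1 ∧ IsVincular w.2 ∧ vincConcat w.1 w.2 = p},
          GPC L lam w.1 * GPC M mu w.2 := by
  have hsubL : ∀ q, ∀ A ∈ occurrences L lam q, A ⊆ Set.Icc 1 N₁ := fun q A hA => hL.2 ▸ hA.1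
  have hsubM : ∀ q, ∀ A ∈ occurrences M mu q, A ⊆ Set.Icc 1 N₂ := fun q A hA => hM.2 ▸ hA.1
  have hdec : occurrences (concatIP L M) (permConcat N₁ N₂ lam mu) p
      = (fun q : Set ℕ × Set ℕ => joinSet N₁ q.1 q.2) ''
          ⋃ w ∈ factorizations p, occurrences L lam w.1 ×ˢ occurrences M mu w.2 := by
    ext A
    constructor
    · intro hA
      have hA' : A ⊆ Set.Icc 1 (N₁ + N₂) := by
        have := hA.1
        rwa [sUnion_concatIP, hL.2, hM.2, ncard_Icc_one, joinSet_Icc] at this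
      obtain ⟨A₁, A₂, h1, h2, rfl⟩ := exists_joinSet hA'
      obtain ⟨w, hw, o1, o2⟩ := (joinSet_mem_occurrences_iff hL hlam hM hmu hp h1 h2).1 hA
      exact ⟨(A₁, A₂), Set.mem_biUnion hw ⟨o1, o2⟩, rfl⟩
    · rintro ⟨⟨A₁, A₂⟩, hmem, rfl⟩
      obtain ⟨w, hw, o1, o2⟩ := Set.mem_iUnion₂.1 hmem
      exact (joinSet_mem_occurrences_iff hL hlam hM hmu hp (hsubL _ _ o1) (hsubM _ _ o2)).2
        ⟨w, hw, o1, o2⟩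
  have hinj : Set.InjOn (fun q : Set ℕ × Set ℕ => joinSet N₁ q.1 q.2)
      (⋃ w ∈ factorizations p, occurrences L lam w.1 ×ˢ occurrences M mu w.2) := by
    apply (joinSet_injOn (N' := N₂)).mono
    intro q hq
    obtain ⟨w, hw, o1, o2⟩ := Set.mem_iUnion₂.1 hq
    exact ⟨hsubL _ _ o1, hsubM _ _ o2⟩
  have hdisj : (factorizations p).PairwiseDisjoint
      fun w => occurrences L lam w.1 ×ˢ occurrences M mu w.2 := by
    intro w hw w' hw' hne
    rw [Function.onFun, Set.disjoint_left]
    rintro q ⟨o, -⟩ ⟨o', -⟩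
    exact hne (factorizations_injOn p hw hw'
      ((ncard_of_mem_occurrences hL o).symm.trans (ncard_of_mem_occurrences hL o')))
  have hcard : GPC (vincConcat (L, lam) (M, mu)).1 (vincConcat (L, lam) (M, mu)).2 p
      = (occurrences (concatIP L M) (permConcat N₁ N₂ lam mu) p).ncard := by
    simp only [GPC, occurrences, vincConcat, hL.2, hM.2, ncard_Icc_one]
  rw [hcard, hdec, hinj.ncard_image, (factorizations_finite p).ncard_biUnion
    (fun w _ => (occurrences_finite hL w.1).prod (occurrences_finite hM w.2)) hdisj]
  exact finsum_mem_congr rfl fun w _ => Set.ncard_prod
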